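/- Macaulay duality: let k be a field of characteristic zero, T = k[y₁,…,yₙ], S = k[x₁,…,xₙ], with T acting on S by letting yᵢ act as ∂/∂xᵢ (write ∂ ∘ f for this action). (1) If I is an ideal of T containing (y₁,…,yₙ)^N for some N, then I^⊥ := {f ∈ S : ∂ ∘ f = 0 for all ∂ ∈ I} is a finite-dimensional T-submodule of S with dim_k I^⊥ = dim_k T/I, and {∂ ∈ T : ∂ ∘ f = 0 for all f ∈ I^⊥} = I. (2) Conversely, if M ⊆ S is a finite-dimensional k-subspace closed under the action of T (equivalently, closed under all partial derivatives ∂/∂xᵢ), then M^⊥ := {∂ ∈ T : ∂ ∘ f = 0 for all f ∈ M} is an ideal of T containing a power of (y₁,…,yₙ), with dim_k T/M^⊥ = dim_k M and {f ∈ S : ∂ ∘ f = 0 for all ∂ ∈ M^⊥} = M. -/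

import Mathlib

/-!
The constant term of `D ∘ f` defines a pairing `⟨D, f⟩` of `T` with `S` in which `y^a` and `x^b` are
orthogonal for `a ≠ b` and `⟨y^a, x^a⟩ = a!`, a unit in characteristic zero. Since
`⟨E * D, f⟩ = ⟨E, D ∘ f⟩`, an ideal or a submodule stable under the action has the same annihilator
for the action as for the pairing. The pairing embeds `S` in the dual of `T`, so that everything
reduces to the duality between the subspaces of finite codimension of `T` and the finite-dimensional
subspaces of its dual; with finitely many variables, the image of `S` contains every functional that
vanishes on a power of `(y₁,…,yₙ)`.
-/

/-- The apolarity action of `T = k[y₁,…,yₙ]` on `S = k[x₁,…,xₙ]`, in which `yᵢ` acts as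
`∂/∂xᵢ`: a polynomial `D = Σ_a c_a y^a` acts as the constant-coefficient differential
operator `Σ_a c_a ∂^a`, so that
`apolar D f = Σ_{a,b} c_a·f_b·(∏ᵢ bᵢ(bᵢ-1)⋯(bᵢ-aᵢ+1))·x^{b-a}`. -/
noncomputable def apolar {k : Type*} [CommSemiring k] {n : ℕ}
    (D f : MvPolynomial (Fin n) k) : MvPolynomial (Fin n) k :=
  ∑ a ∈ D.support, ∑ b ∈ f.support,
    MvPolynomial.monomial (b - a)
      (D.coeff a * f.coeff b * ∏ i : Fin n, ((b i).descFactorial (a i) : k))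

section Annihilators

variable {k T S : Type*} [CommSemiring k] [CommSemiring T] [Algebra k T] [AddCommMonoid S]
  [Module k S] (ρ : T →ₐ[k] Module.End k S)

/-- Macaulay's inverse system `I^⊥` of an ideal `I`, for an action `ρ` of `T` on `S`. The action is
an algebra homomorphism rather than a `Module` instance because `S` will be the underlying space of
`T`, which already is a `T`-module by multiplication. -/
def inverseSystem (I : Ideal T) : Submodule k S :=
  ⨅ D ∈ I, LinearMap.ker (ρ D)

/-- The ideal `M^⊥` of the elements of `T` that annihilate a subspace `M` under the action `ρ`. -/
def annihilatorIdeal (M : Submodule k S) : Ideal T where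
  carrier := {D | ∀ f ∈ M, ρ D f = 0}
  add_mem' hD hE f hf := by rw [map_add, LinearMap.add_apply, hD f hf, hE f hf, add_zero]
  zero_mem' f _ := by rw [map_zero, LinearMap.zero_apply]
  smul_mem' E D hD f hf := by
    rw [smul_eq_mul, map_mul, Module.End.mul_apply, hD f hf, map_zero]

variable {ρ}

lemma mem_inverseSystem {I : Ideal T} {f : S} : f ∈ inverseSystem ρ I ↔ ∀ D ∈ I, ρ D f = 0 := by
  simp only [inverseSystem, Submodule.mem_iInf, LinearMap.mem_ker]

lemma mem_annihilatorIdeal {M : Submodule k S} {D : T} :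
    D ∈ annihilatorIdeal ρ M ↔ ∀ f ∈ M, ρ D f = 0 :=
  Iff.rfl

lemma le_annihilatorIdeal_iff {I : Ideal T} {M : Submodule k S} :
    I ≤ annihilatorIdeal ρ M ↔ M ≤ inverseSystem ρ I := by
  simp only [SetLike.le_def, mem_annihilatorIdeal, mem_inverseSystem]
  exact ⟨fun h f hf D hD => h hD f hf, fun h D hD f hf => h hf D hD⟩

lemma map_mem_inverseSystem {I : Ideal T} {f : S} (hf : f ∈ inverseSystem ρ I) (D : T) :
    ρ D f ∈ inverseSystem ρ I :=
  mem_inverseSystem.2 fun E hE => by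
    rw [← Module.End.mul_apply, ← map_mul]
    exact mem_inverseSystem.1 hf _ (I.mul_mem_right D hE)

variable (ρ) in
/-- The pairing `⟨D, f⟩ = ε (D ∘ f)` of `T` with `S` that a functional `ε` on `S` induces: the
action of `D` on `S` is adjoint to multiplication by `D` on `T`. -/
def actionPairing (ε : Module.Dual k S) : T →ₗ[k] S →ₗ[k] k :=
  ρ.toLinearMap.compr₂ ε

variable {ε : Module.Dual k S}

lemma actionPairing_apply (D : T) (f : S) : actionPairing ρ ε D f = ε (ρ D f) :=
  rfl

lemma actionPairing_mul (D E : T) (f : S) :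
    actionPairing ρ ε (D * E) f = actionPairing ρ ε D (ρ E f) := by
  rw [actionPairing_apply, actionPairing_apply, map_mul, Module.End.mul_apply]

lemma inverseSystem_eq_comap_dualAnnihilator (hε : (actionPairing ρ ε).SeparatingRight)
    (I : Ideal T) :
    inverseSystem ρ I =
      (I.restrictScalars k).dualAnnihilator.comap (actionPairing ρ ε).flip := by
  ext f
  rw [mem_inverseSystem, Submodule.mem_comap, Submodule.mem_dualAnnihilator]
  refine ⟨fun hf D hD => ?_, fun hf D hD => hε _ fun E => ?_⟩
  · rw [LinearMap.flip_apply, actionPairing_apply, hf D hD, map_zero]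
  · rw [← actionPairing_mul]
    exact hf _ (I.mul_mem_left E hD)

lemma annihilatorIdeal_eq_dualCoannihilator_map (hε : (actionPairing ρ ε).SeparatingRight)
    {M : Submodule k S} (hM : ∀ D, ∀ f ∈ M, ρ D f ∈ M) :
    (annihilatorIdeal ρ M).restrictScalars k =
      (M.map (actionPairing ρ ε).flip).dualCoannihilator := by
  ext D
  simp only [Submodule.restrictScalars_mem, mem_annihilatorIdeal, Submodule.mem_dualCoannihilator,
    Submodule.mem_map, forall_exists_index, and_imp, forall_apply_eq_imp_iff₂,
    LinearMap.flip_apply]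
  refine ⟨fun hD f hf => ?_, fun hD f hf => hε _ fun E => ?_⟩
  · rw [actionPairing_apply, hD f hf, map_zero]
  · rw [← actionPairing_mul, mul_comm, actionPairing_mul]
    exact hD _ (hM E f hf)

end Annihilators

section Duality

open Module

variable {k T S : Type*} [Field k] [CommRing T] [Algebra k T] [AddCommGroup S] [Module k S]
  {ρ : T →ₐ[k] Module.End k S} {ε : Dual k S}

lemma finrank_quotient_restrictScalars (I : Ideal T) :
    finrank k (T ⧸ I.restrictScalars k) = finrank k (T ⧸ I) :=
  (Submodule.Quotient.restrictScalarsEquiv k I).finrank_eq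

lemma finrank_dualAnnihilator {V : Type*} [AddCommGroup V] [Module k V] (W : Submodule k V) :
    finrank k W.dualAnnihilator = finrank k (V ⧸ W) := by
  rw [← W.dualQuotEquivDualAnnihilator.finrank_eq, Subspace.dual_finrank_eq]

lemma injective_flip_actionPairing (hε : (actionPairing ρ ε).SeparatingRight) :
    Function.Injective (actionPairing ρ ε).flip :=
  LinearMap.ker_eq_bot.1 (LinearMap.separatingRight_iff_flip_ker_eq_bot.1 hε)

lemma map_inverseSystem_eq_dualAnnihilator (hε : (actionPairing ρ ε).SeparatingRight) {I : Ideal T}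
    (hI : (I.restrictScalars k).dualAnnihilator ≤ LinearMap.range (actionPairing ρ ε).flip) :
    (inverseSystem ρ I).map (actionPairing ρ ε).flip = (I.restrictScalars k).dualAnnihilator := by
  rw [inverseSystem_eq_comap_dualAnnihilator hε, Submodule.map_comap_eq_of_le hI]

theorem finrank_inverseSystem (hε : (actionPairing ρ ε).SeparatingRight) {I : Ideal T}
    (hI : (I.restrictScalars k).dualAnnihilator ≤ LinearMap.range (actionPairing ρ ε).flip) :
    finrank k (inverseSystem ρ I) = finrank k (T ⧸ I) :=
  calc finrank k (inverseSystem ρ I)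
      = finrank k ((inverseSystem ρ I).map (actionPairing ρ ε).flip) :=
        (Submodule.equivMapOfInjective _ (injective_flip_actionPairing hε) _).finrank_eq
    _ = finrank k (I.restrictScalars k).dualAnnihilator := by
        rw [map_inverseSystem_eq_dualAnnihilator hε hI]
    _ = finrank k (T ⧸ I.restrictScalars k) := finrank_dualAnnihilator _
    _ = finrank k (T ⧸ I) := finrank_quotient_restrictScalars I

theorem annihilatorIdeal_inverseSystem (hε : (actionPairing ρ ε).SeparatingRight) {I : Ideal T}
    (hI : (I.restrictScalars k).dualAnnihilator ≤ LinearMap.range (actionPairing ρ ε).flip) :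
    annihilatorIdeal ρ (inverseSystem ρ I) = I := by
  apply Submodule.restrictScalars_injective k
  rw [annihilatorIdeal_eq_dualCoannihilator_map hε fun D f hf => map_mem_inverseSystem hf D,
    map_inverseSystem_eq_dualAnnihilator hε hI, Subspace.dualAnnihilator_dualCoannihilator_eq]

theorem finrank_quotient_annihilatorIdeal (hε : (actionPairing ρ ε).SeparatingRight)
    {M : Submodule k S} [FiniteDimensional k M] (hM : ∀ D, ∀ f ∈ M, ρ D f ∈ M) :
    finrank k (T ⧸ annihilatorIdeal ρ M) = finrank k M := by
  let W := M.map (actionPairing ρ ε).flip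
  calc finrank k (T ⧸ annihilatorIdeal ρ M)
      = finrank k (T ⧸ W.dualCoannihilator) := by
        rw [← finrank_quotient_restrictScalars, annihilatorIdeal_eq_dualCoannihilator_map hε hM]
    _ = finrank k W.dualCoannihilator.dualAnnihilator := (finrank_dualAnnihilator _).symm
    _ = finrank k W := by rw [Subspace.dualCoannihilator_dualAnnihilator_eq]
    _ = finrank k M :=
        (Submodule.equivMapOfInjective _ (injective_flip_actionPairing hε) _).finrank_eq.symm

theorem inverseSystem_annihilatorIdeal (hε : (actionPairing ρ ε).SeparatingRight)
    {M : Submodule k S} [FiniteDimensional k M] (hM : ∀ D, ∀ f ∈ M, ρ D f ∈ M) :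
    inverseSystem ρ (annihilatorIdeal ρ M) = M := by
  rw [inverseSystem_eq_comap_dualAnnihilator hε, annihilatorIdeal_eq_dualCoannihilator_map hε hM,
    Subspace.dualCoannihilator_dualAnnihilator_eq,
    Submodule.comap_map_eq_of_injective (injective_flip_actionPairing hε)]

end Duality

section DifferentialOperators

open MvPolynomial

variable {k σ : Type*} [CommSemiring k]

lemma pderiv_pderiv_comm (i j : σ) (f : MvPolynomial σ k) :
    pderiv i (pderiv j f) = pderiv j (pderiv i f) := by
  ext a
  rcases eq_or_ne i j with rfl | hij
  · rfl
  · simp only [coeff_pderiv, Finsupp.add_apply, Finsupp.single_eq_of_ne hij,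
      Finsupp.single_eq_of_ne hij.symm, add_right_comm a, add_zero, mul_right_comm]

lemma isMulCommutative_adjoin_pderiv :
    IsMulCommutative (Algebra.adjoin k (Set.range fun i : σ =>
      ((pderiv i).toLinearMap : Module.End k (MvPolynomial σ k)))) :=
  Algebra.isMulCommutative_adjoin k <| by
    rintro _ ⟨i, rfl⟩ _ ⟨j, rfl⟩
    exact LinearMap.ext (pderiv_pderiv_comm i j)

variable (k σ) in
open scoped IsMulCommutative in
/-- The action of polynomials on polynomials as constant-coefficient differential operators, that
is, evaluation at the partial derivatives. It takes values in the subalgebra which these generate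
because `MvPolynomial.aeval` requires a commutative target. -/
noncomputable def diffAction : MvPolynomial σ k →ₐ[k] Module.End k (MvPolynomial σ k) :=
  have := isMulCommutative_adjoin_pderiv (k := k) (σ := σ)
  (Subalgebra.val _).comp <| aeval fun i : σ =>
    (⟨(pderiv i).toLinearMap, Algebra.subset_adjoin ⟨i, rfl⟩⟩ :
      Algebra.adjoin k (Set.range fun i : σ =>
        ((pderiv i).toLinearMap : Module.End k (MvPolynomial σ k))))

lemma diffAction_X (i : σ) : diffAction k σ (X i) = (pderiv i).toLinearMap := by
  simp [diffAction]

lemma pderiv_pow_monomial (i : σ) (m : ℕ) (b : σ →₀ ℕ) (d : k) :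
    ((pderiv i).toLinearMap ^ m : Module.End k (MvPolynomial σ k)) (monomial b d) =
      monomial (b - Finsupp.single i m) (d * (b i).descFactorial m) := by
  induction m with
  | zero => simp
  | succ m ih =>
    rw [pow_succ', Module.End.mul_apply, ih, Derivation.coeFn_coe, pderiv_monomial, tsub_tsub,
      ← Finsupp.single_add, Nat.descFactorial_succ, Finsupp.tsub_apply, Finsupp.single_eq_same]
    push_cast
    ring_nf

lemma diffAction_monomial_monomial (a b : σ →₀ ℕ) (c d : k) :
    diffAction k σ (monomial a c) (monomial b d) =
      monomial (b - a) (c * d * (a.prod fun i m => (b i).descFactorial m : ℕ)) := by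
  induction a using Finsupp.induction with
  | zero =>
    rw [← C_apply, ← algebraMap_eq, AlgHom.commutes, Module.algebraMap_end_apply, smul_monomial]
    simp
  | single_add i m a hi _ ih =>
    have hba : (b - a) i = b i := by
      rw [Finsupp.tsub_apply, Finsupp.notMem_support_iff.1 hi, tsub_zero]
    have hdisj : Disjoint (Finsupp.single i m).support a.support :=
      (Finset.disjoint_singleton_left.2 hi).mono_left Finsupp.support_single_subset
    rw [monomial_single_add, map_mul, Module.End.mul_apply, ih, map_pow, diffAction_X,
      pderiv_pow_monomial, hba, tsub_tsub, add_comm a, Finsupp.prod_add_index_of_disjoint hdisj,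
      Finsupp.prod_single_index (h := fun i m => (b i).descFactorial m) (Nat.descFactorial_zero _),
      Nat.cast_mul, mul_assoc, mul_comm (Nat.cast (a.prod _))]

lemma apolar_eq_diffAction {n : ℕ} (D f : MvPolynomial (Fin n) k) :
    apolar D f = diffAction k (Fin n) D f := by
  conv_rhs => rw [D.as_sum, f.as_sum]
  simp only [map_sum, LinearMap.sum_apply, diffAction_monomial_monomial]
  rw [apolar, Finset.sum_comm]
  refine Finset.sum_congr rfl fun b _ => Finset.sum_congr rfl fun a _ => ?_
  rw [Finsupp.prod_fintype _ _ fun i => Nat.descFactorial_zero _, Nat.cast_prod]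

variable (k σ) in
/-- The apolar pairing `⟨D, f⟩`, the constant term of the polynomial that the differential operator
`D` makes of `f`. -/
noncomputable abbrev apolarPairing : MvPolynomial σ k →ₗ[k] MvPolynomial σ k →ₗ[k] k :=
  actionPairing (diffAction k σ) (lcoeff k 0)

lemma apolarPairing_monomial_monomial [DecidableEq σ] (a b : σ →₀ ℕ) (c d : k) :
    apolarPairing k σ (monomial a c) (monomial b d) =
      if b = a then c * d * (a.prod fun _ m => m.factorial : ℕ) else 0 := by
  rw [actionPairing_apply, diffAction_monomial_monomial, lcoeff_apply, coeff_monomial]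
  rcases eq_or_ne b a with rfl | hab
  · simp only [tsub_self, if_true, Nat.descFactorial_self, Finsupp.prod]
  · rw [if_neg hab, ite_eq_right_iff]
    intro h
    obtain ⟨i, hi⟩ : ∃ i, b i < a i := by
      by_contra! hle
      exact hab (le_antisymm (tsub_eq_zero_iff_le.1 h) hle)
    rw [Finsupp.prod, Finset.prod_eq_zero (Finsupp.mem_support_iff.2 (Nat.ne_zero_of_lt hi))
      (Nat.descFactorial_eq_zero_iff_lt.2 hi), Nat.cast_zero, mul_zero]

lemma apolarPairing_monomial (a : σ →₀ ℕ) (c : k) (f : MvPolynomial σ k) :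
    apolarPairing k σ (monomial a c) f =
      c * coeff a f * (a.prod fun _ m => m.factorial : ℕ) := by
  classical
  induction f using MvPolynomial.induction_on' with
  | monomial b d =>
    rw [apolarPairing_monomial_monomial, coeff_monomial]
    split_ifs <;> simp
  | add f g hf hg => rw [map_add, hf, hg, coeff_add, mul_add, add_mul]

end DifferentialOperators

section MacaulayDuality

open MvPolynomial

variable {k σ : Type*} [Field k] [CharZero k]

variable (k) in
lemma cast_prod_factorial_ne_zero (a : σ →₀ ℕ) :
    ((a.prod fun _ m => m.factorial : ℕ) : k) ≠ 0 :=
  Nat.cast_ne_zero.2 <| Finset.prod_ne_zero_iff.2 fun i _ => (a i).factorial_ne_zero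

lemma apolarPairing_separatingRight : (apolarPairing k σ).SeparatingRight := by
  intro f hf
  ext a
  have ha := hf (monomial a 1)
  rw [apolarPairing_monomial, one_mul] at ha
  exact (mul_eq_zero.1 ha).resolve_right (cast_prod_factorial_ne_zero k a)

lemma inverseSystem_pow_idealOfVars (N : ℕ) :
    inverseSystem (diffAction k σ) (idealOfVars σ k ^ N) =
      restrictSupport k {a | a.degree < N} := by
  ext f
  rw [inverseSystem_eq_comap_dualAnnihilator apolarPairing_separatingRight, Submodule.mem_comap,
    Submodule.mem_dualAnnihilator, mem_restrictSupport_iff]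
  refine ⟨fun hf a ha => ?_, fun hf D hD => ?_⟩
  · by_contra! hdeg
    have hpair := hf (monomial a 1) ((monomial_mem_pow_idealOfVars_iff N a one_ne_zero).2
      (not_lt.1 hdeg))
    rw [LinearMap.flip_apply, apolarPairing_monomial, one_mul] at hpair
    exact mul_ne_zero (mem_support_iff.1 ha) (cast_prod_factorial_ne_zero k a) hpair
  · rw [LinearMap.flip_apply, D.as_sum, map_sum, LinearMap.sum_apply]
    refine Finset.sum_eq_zero fun a ha => ?_
    have hfa : coeff a f = 0 := by
      by_contra hne
      exact ((mem_pow_idealOfVars_iff N D).1 hD a ha).not_gt (hf (mem_support_iff.2 hne))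
    rw [apolarPairing_monomial, hfa, mul_zero, zero_mul]

lemma exists_pow_idealOfVars_le_annihilatorIdeal (M : Submodule k (MvPolynomial σ k))
    [FiniteDimensional k M] : ∃ N, idealOfVars σ k ^ N ≤ annihilatorIdeal (diffAction k σ) M := by
  obtain ⟨s, rfl⟩ := Module.Finite.iff_fg.1 ‹FiniteDimensional k M›
  refine ⟨s.sup totalDegree + 1, le_annihilatorIdeal_iff.2 ?_⟩
  rw [inverseSystem_pow_idealOfVars, Submodule.span_le]
  exact fun f hf a ha => Nat.lt_succ_of_le ((le_totalDegree ha).trans (Finset.le_sup hf))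

lemma finiteDimensional_inverseSystem [Finite σ] {I : Ideal (MvPolynomial σ k)} {N : ℕ}
    (hI : idealOfVars σ k ^ N ≤ I) :
    FiniteDimensional k (inverseSystem (diffAction k σ) I) := by
  have hle : inverseSystem (diffAction k σ) I ≤ restrictSupport k {a | a.degree < N} := by
    rw [← inverseSystem_pow_idealOfVars]
    exact biInf_mono hI
  have : Finite {a : σ →₀ ℕ | a.degree < N} := Finsupp.finite_of_degree_lt N
  have := Module.Finite.of_basis (basisRestrictSupport k {a : σ →₀ ℕ | a.degree < N})
  exact Submodule.finiteDimensional_of_le hle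

lemma dualAnnihilator_le_range_flip_apolarPairing [Finite σ] {I : Ideal (MvPolynomial σ k)} {N : ℕ}
    (hI : idealOfVars σ k ^ N ≤ I) :
    (I.restrictScalars k).dualAnnihilator ≤ LinearMap.range (apolarPairing k σ).flip := by
  classical
  intro φ hφ
  rw [Submodule.mem_dualAnnihilator] at hφ
  let s := (Finsupp.finite_of_degree_lt (σ := σ) N).toFinset
  refine ⟨∑ a ∈ s, monomial a (φ (monomial a 1) / (a.prod fun _ m => m.factorial : ℕ)),
    (basisMonomials σ k).ext fun a => ?_⟩
  rw [coe_basisMonomials, LinearMap.flip_apply, apolarPairing_monomial, coeff_sum, one_mul]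
  simp only [coeff_monomial, Finset.sum_ite_eq', s, Set.Finite.mem_toFinset, Set.mem_ofPred_eq]
  split_ifs with hdeg
  · exact div_mul_cancel₀ _ (cast_prod_factorial_ne_zero k a)
  · rw [zero_mul]
    exact (hφ _ (hI ((monomial_mem_pow_idealOfVars_iff N a one_ne_zero).2 (not_lt.1 hdeg)))).symm

theorem deformations_stmt7_general :
    (Finite σ → ∀ (I : Ideal (MvPolynomial σ k)) (N : ℕ), idealOfVars σ k ^ N ≤ I →
      ∃ V : Submodule k (MvPolynomial σ k),
        (V : Set (MvPolynomial σ k)) = {f | ∀ D ∈ I, diffAction k σ D f = 0} ∧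
        (∀ D, ∀ f ∈ V, diffAction k σ D f ∈ V) ∧
        FiniteDimensional k V ∧
        Module.finrank k V = Module.finrank k (MvPolynomial σ k ⧸ I) ∧
        {D | ∀ f ∈ V, diffAction k σ D f = 0} = (I : Set (MvPolynomial σ k))) ∧
    (∀ M : Submodule k (MvPolynomial σ k), FiniteDimensional k M →
      (∀ D, ∀ f ∈ M, diffAction k σ D f ∈ M) →
      ∃ I : Ideal (MvPolynomial σ k),
        (I : Set (MvPolynomial σ k)) = {D | ∀ f ∈ M, diffAction k σ D f = 0} ∧
        (∃ N : ℕ, idealOfVars σ k ^ N ≤ I) ∧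
        Module.finrank k (MvPolynomial σ k ⧸ I) = Module.finrank k M ∧
        {f | ∀ D ∈ I, diffAction k σ D f = 0} = (M : Set (MvPolynomial σ k))) := by
  have hsep := apolarPairing_separatingRight (k := k) (σ := σ)
  refine ⟨fun _ I N hI => ?_, fun M _ hM => ?_⟩
  · have hrange := dualAnnihilator_le_range_flip_apolarPairing hI
    exact ⟨inverseSystem (diffAction k σ) I, Set.ext fun _ => mem_inverseSystem,
      fun D f hf => map_mem_inverseSystem hf D, finiteDimensional_inverseSystem hI,
      finrank_inverseSystem hsep hrange,
      congrArg SetLike.coe (annihilatorIdeal_inverseSystem hsep hrange)⟩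
  · refine ⟨annihilatorIdeal (diffAction k σ) M, rfl,
      exists_pow_idealOfVars_le_annihilatorIdeal M, finrank_quotient_annihilatorIdeal hsep hM, ?_⟩
    exact (Set.ext fun _ => mem_inverseSystem.symm).trans
      (congrArg SetLike.coe (inverseSystem_annihilatorIdeal hsep hM))

end MacaulayDuality

/-- **Macaulay duality.** Let `k` be a field of characteristic zero,
`T = k[y₁,…,yₙ]` acting on `S = k[x₁,…,xₙ]` by `yᵢ ↦ ∂/∂xᵢ`.
(1) If `I ⊴ T` contains `(y₁,…,yₙ)^N` for some `N`, then
`I^⊥ = {f : ∂ ∘ f = 0 for all ∂ ∈ I}` is a finite-dimensional `T`-submodule of `S` with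
`dim_k I^⊥ = dim_k T/I` and `(I^⊥)^⊥ = I`.
(2) Conversely, if `M ⊆ S` is a finite-dimensional `k`-subspace closed under the action
of `T`, then `M^⊥ = {∂ : ∂ ∘ f = 0 for all f ∈ M}` is an ideal of `T` containing a power
of `(y₁,…,yₙ)`, with `dim_k T/M^⊥ = dim_k M` and `(M^⊥)^⊥ = M`. -/
theorem deformations_stmt7 {k : Type*} [Field k] [CharZero k] {n : ℕ} :
    (∀ (I : Ideal (MvPolynomial (Fin n) k)) (N : ℕ),
      (Ideal.span (Set.range (MvPolynomial.X : Fin n → MvPolynomial (Fin n) k))) ^ N ≤ I →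
      ∃ V : Submodule k (MvPolynomial (Fin n) k),
        (V : Set (MvPolynomial (Fin n) k)) = {f | ∀ D ∈ I, apolar D f = 0} ∧
        (∀ D : MvPolynomial (Fin n) k, ∀ f ∈ V, apolar D f ∈ V) ∧
        FiniteDimensional k ↥V ∧
        Module.finrank k ↥V = Module.finrank k (MvPolynomial (Fin n) k ⧸ I) ∧
        {D : MvPolynomial (Fin n) k | ∀ f ∈ V, apolar D f = 0} = (I : Set _))
    ∧
    (∀ M : Submodule k (MvPolynomial (Fin n) k), FiniteDimensional k ↥M →
      (∀ D : MvPolynomial (Fin n) k, ∀ f ∈ M, apolar D f ∈ M) →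
      ∃ I : Ideal (MvPolynomial (Fin n) k),
        (I : Set (MvPolynomial (Fin n) k)) = {D | ∀ f ∈ M, apolar D f = 0} ∧
        (∃ N : ℕ,
          (Ideal.span (Set.range (MvPolynomial.X : Fin n → MvPolynomial (Fin n) k))) ^ N
            ≤ I) ∧
        Module.finrank k (MvPolynomial (Fin n) k ⧸ I) = Module.finrank k ↥M ∧
        {f : MvPolynomial (Fin n) k | ∀ D ∈ I, apolar D f = 0} = (M : Set _)) := by
  simp only [apolar_eq_diffAction]
  exact deformations_stmt7_general.imp_left fun h => h inferInstance
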